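/- Let vx be an edge of G₉ with x lying in a negative cone C̄ᵢ of v. If x is not the closest canonical vertex to v in either of the (at most two) subcones of C̄ᵛᵢ containing x, then the edge vx belongs to the canonical path of at most one vertex. -/

import Mathlib

/-!
For `k < 3` let `hgt k` be the signed height along the bisector of the positive cone `C_k`. The three
heights sum to zero, and `C_i` is the set of points lower than the apex in the two other heights, so
all cone conditions become linear inequalities. If `u` has `v` and `x` as consecutive canonical
vertices in `C̄_j`, then `v` and `x` both choose `u` in their cone `C_j`, and the wedge at `u` between
them contains no canonical vertex of `u` and no constraint at `u` (`Gap`).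

* Sweeping (`Cfg.sweep`, `Cfg.block`): an edge `au` chosen by `a` is not crossed by a visibility segment
  that ends at a point of the same cone of `a` lower than `u`. Otherwise the first point met when a ray
  at `a` rotates away from `au` would be visible, would lie in the subcone of `u`, and would be
  preferred to `u`.
* Empty triangles (`Gap.notIn`, `Gap.empty`, `Gap.see`): neither of `v`, `x` is in the cone `C_j` of the
  other, the open triangle `u v x` contains no point of `P`, and `v` and `x` see each other.

Let `v ∈ C_i(x)`, and let `vx` be on the canonical paths of `u` in `C̄_j` and of `u'` in `C̄_j'`. Then
`j, j' ≠ i` by `Gap.notIn`.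

If `j = j'` and `u ≠ u'`, both vertices are on the same side of `vx`. Either one of them lies in the
triangle that the other spans with `v` and `x`, or two of the edges from `v`, `x` to `u`, `u'` cross, and
sweeping excludes that (`Gap.unique`).

If `j ≠ j'`, the vertices `u` and `u'` lie on opposite sides of `vx`, and on both sides of `vx` the
empty triangles and sweeping exclude every point visible from `x` in `C_i` that is closer to `x` than
`v`, and every point of `C̄_i(v)` that is closer to `v` than `x`. Hence `x` chooses `v` and `x` is a
closest canonical vertex of `v` (`Gap.closest`), contrary to the hypothesis.
-/

open Real Set

noncomputable section

namespace CHT6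

/-- Points in the plane. -/
abbrev Pt := ℝ × ℝ

/-- Euclidean distance. -/
def dst (p q : Pt) : ℝ := Real.sqrt ((p.1 - q.1) ^ 2 + (p.2 - q.2) ^ 2)

/-- Unsigned angle at `q` between segments `qp` and `qr`. -/
def ang (p q r : Pt) : ℝ :=
  Real.arccos (((p.1 - q.1) * (r.1 - q.1) + (p.2 - q.2) * (r.2 - q.2)) / (dst p q * dst r q))

/-- 2D cross product. -/
def crossP (a b : Pt) : ℝ := a.1 * b.2 - a.2 * b.1

/-- The segments `ab` and `cd` properly cross: their relative interiors meet. -/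
def PCross (a b c d : Pt) : Prop := (openSegment ℝ a b ∩ openSegment ℝ c d).Nonempty

/-- `uz` is a constraint of `S`. -/
def Constr (S : Set (Pt × Pt)) (u z : Pt) : Prop := (u, z) ∈ S ∨ (z, u) ∈ S

/-- `u` and `v` see each other: `uv` is a constraint or no constraint properly crosses it. -/
def CanSee (S : Set (Pt × Pt)) (u v : Pt) : Prop :=
  Constr S u v ∨ ∀ c ∈ S, ¬ PCross c.1 c.2 u v

/-- Rotation of the plane by angle `θ` about the origin. -/
def rot (θ : ℝ) (p : Pt) : Pt :=
  (Real.cos θ * p.1 - Real.sin θ * p.2, Real.sin θ * p.1 + Real.cos θ * p.2)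

/-- `p` relative to `u`, rotated so that the positive cone `Cᵢ` becomes the upward cone. -/
def rel (i : ℕ) (u p : Pt) : Pt := rot (-(2 * Real.pi * i / 3)) (p - u)

/-- `p` lies in the (open) positive cone `Cᵢ` of `u` (width π/3; `C₀` is upward vertical). -/
def inPos (i : ℕ) (u p : Pt) : Prop := Real.sqrt 3 * |(rel i u p).1| < (rel i u p).2

/-- `p` lies in the negative cone `C̄ᵢ` of `u`. -/
def inNeg (i : ℕ) (u p : Pt) : Prop := inPos i p u

/-- Length of the projection of `p` onto the bisector of the positive cone `Cᵢ` of `u`. -/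
def projLen (i : ℕ) (u p : Pt) : ℝ := (rel i u p).2

/-- Projected distance of `p` from `u` for the negative cone `C̄ᵢ` of `u`. -/
def negProj (i : ℕ) (u p : Pt) : ℝ := projLen i p u

/-- `p` and `q` are not strictly separated, within the cone `cone` at `u`, by a constraint
incident to `u`: they lie in a common (closed) subcone. -/
def SameSubIn (cone : Pt → Pt → Prop) (S : Set (Pt × Pt)) (u p q : Pt) : Prop :=
  ∀ z, Constr S u z → cone u z →
    ¬ (crossP (z - u) (p - u) * crossP (z - u) (q - u) < 0)

def SameSubPos (S : Set (Pt × Pt)) (i : ℕ) (u p q : Pt) : Prop := SameSubIn (inPos i) S u p q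

def SameSubNeg (S : Set (Pt × Pt)) (i : ℕ) (u p q : Pt) : Prop := SameSubIn (inNeg i) S u p q

/-- General position: no two points of `P` define a line parallel to one of the six cone rays
(slopes `0`, `√3`, `-√3`), and no three points of `P` are collinear. -/
def GenPos (P : Set Pt) : Prop :=
  (∀ p ∈ P, ∀ q ∈ P, p ≠ q →
    p.2 ≠ q.2 ∧ q.2 - p.2 ≠ Real.sqrt 3 * (q.1 - p.1) ∧
      q.2 - p.2 ≠ -(Real.sqrt 3 * (q.1 - p.1))) ∧
  (∀ p ∈ P, ∀ q ∈ P, ∀ r ∈ P, p ≠ q → q ≠ r → p ≠ r → ¬ Collinear ℝ ({p, q, r} : Set Pt))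

/-- `v` is, among the vertices visible from `u` in the positive subcone of `u` containing `v`,
the one minimizing the projection onto the cone bisector: `u` adds the edge `uv`. -/
def EdgeDir (P : Set Pt) (S : Set (Pt × Pt)) (u v : Pt) : Prop :=
  u ∈ P ∧ v ∈ P ∧ ∃ i < 3, inPos i u v ∧ CanSee S u v ∧
    ∀ w ∈ P, w ≠ u → inPos i u w → CanSee S u w → SameSubPos S i u v w →
      projLen i u v ≤ projLen i u w

/-- Edges of the constrained half-θ₆-graph. -/
def HEdge (P : Set Pt) (S : Set (Pt × Pt)) (u v : Pt) : Prop :=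
  EdgeDir P S u v ∨ EdgeDir P S v u

/-- `f` is a path in the graph with edge relation `E`. -/
def IsPath (E : Pt → Pt → Prop) {n : ℕ} (f : Fin (n + 1) → Pt) : Prop :=
  ∀ j : Fin n, E (f j.castSucc) (f j.succ)

/-- Euclidean length of a polygonal path. -/
def pathLen {n : ℕ} (f : Fin (n + 1) → Pt) : ℝ :=
  ∑ j : Fin n, dst (f j.castSucc) (f j.succ)

/-- `x` is a vertex of the canonical sequence of `u` in the negative cone `C̄ᵘᵢ`. -/
def CanonVert (P : Set Pt) (S : Set (Pt × Pt)) (i : ℕ) (u x : Pt) : Prop :=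
  x ∈ P ∧ HEdge P S u x ∧ inNeg i u x

/-- `v` and `w` are consecutive (in counterclockwise order) vertices of the canonical path of
`u` in a subcone of the negative cone `C̄ᵘᵢ`. -/
def ConsecCanon (P : Set Pt) (S : Set (Pt × Pt)) (i : ℕ) (u v w : Pt) : Prop :=
  CanonVert P S i u v ∧ CanonVert P S i u w ∧ SameSubNeg S i u v w ∧
  crossP (v - u) (w - u) > 0 ∧
  ∀ x ∈ P, CanonVert P S i u x → SameSubNeg S i u v x →
    ¬ (crossP (v - u) (x - u) > 0 ∧ crossP (x - u) (w - u) > 0)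

/-- `x` is a closest canonical vertex of `u` in (a subcone of) the negative cone `C̄ᵘᵢ`,
distances being measured by projection onto the cone bisector. -/
def ClosestCanon (P : Set Pt) (S : Set (Pt × Pt)) (i : ℕ) (u x : Pt) : Prop :=
  CanonVert P S i u x ∧
  ∀ y ∈ P, CanonVert P S i u y → SameSubNeg S i u x y → negProj i u x ≤ negProj i u y

/-- Edges of the bounded-degree graph `G₉`: canonical-path edges together with, for each
negative subcone, the edge to the closest canonical vertex. -/
def G9Edge (P : Set Pt) (S : Set (Pt × Pt)) (a b : Pt) : Prop :=
  (∃ u ∈ P, ∃ i < 3, ConsecCanon P S i u a b ∨ ConsecCanon P S i u b a) ∨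
  (∃ i < 3, ClosestCanon P S i a b ∨ ClosestCanon P S i b a)

/-- Coordinate of `p` along the right boundary direction `(1/2, √3/2)` of the upward cone. -/
def coordA (p : Pt) : ℝ := p.1 + p.2 / Real.sqrt 3

/-- Coordinate of `p` along the left boundary direction `(-1/2, √3/2)` of the upward cone. -/
def coordB (p : Pt) : ℝ := -p.1 + p.2 / Real.sqrt 3

end CHT6

/-! ### Heights and affine coordinates -/

namespace CHT6

/-- Signed height along the bisector of the positive cone `C_k`, in closed form. -/
def hgt (k : ℕ) (p : Pt) : ℝ :=
  if k = 0 then p.2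
  else if k = 1 then -(Real.sqrt 3 / 2 * p.1) - p.2 / 2
  else Real.sqrt 3 / 2 * p.1 - p.2 / 2

/-- The point at parameter `τ` on the line from `a` to `b`. -/
def pt (a b : Pt) (τ : ℝ) : Pt := (1 - τ) • a + τ • b

/-- The coefficient of `a - q` when `m - q` is expanded in the basis `a - q`, `w - q`. The
coefficient of `w - q` is `al q w a m`. Meaningful only when `q`, `a`, `w` are not collinear. -/
def al (q a w m : Pt) : ℝ := crossP (m - q) (w - q) / crossP (a - q) (w - q)

lemma rel_formula (k : ℕ) (hk : k < 3) (u p : Pt) :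
    (rel k u p).2 = hgt k p - hgt k u ∧
    (k = 0 → (rel k u p).1 = p.1 - u.1) ∧
    (k = 1 → (rel k u p).1 = -(p.1 - u.1) / 2 + Real.sqrt 3 / 2 * (p.2 - u.2)) ∧
    (k = 2 → (rel k u p).1 = -(p.1 - u.1) / 2 - Real.sqrt 3 / 2 * (p.2 - u.2)) := by
  have c1 : Real.cos (2 * Real.pi / 3) = -1 / 2 := by
    rw [show 2 * Real.pi / 3 = Real.pi - Real.pi / 3 by ring, Real.cos_pi_sub, Real.cos_pi_div_three]
    norm_num
  have s1 : Real.sin (2 * Real.pi / 3) = Real.sqrt 3 / 2 := by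
    rw [show 2 * Real.pi / 3 = Real.pi - Real.pi / 3 by ring, Real.sin_pi_sub, Real.sin_pi_div_three]
  have c2 : Real.cos (2 * Real.pi * 2 / 3) = -1 / 2 := by
    rw [show 2 * Real.pi * 2 / 3 = Real.pi / 3 + Real.pi by ring, Real.cos_add_pi,
      Real.cos_pi_div_three]
    norm_num
  have s2 : Real.sin (2 * Real.pi * 2 / 3) = -(Real.sqrt 3 / 2) := by
    rw [show 2 * Real.pi * 2 / 3 = Real.pi / 3 + Real.pi by ring, Real.sin_add_pi,
      Real.sin_pi_div_three]
  interval_cases k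
  · simp [rel, rot, hgt]
  · simp [rel, rot, hgt, c1, s1]
    constructor <;> ring
  · simp [rel, rot, hgt, c2, s2]
    constructor <;> ring

lemma projLen_eq {k : ℕ} (hk : k < 3) (u p : Pt) : projLen k u p = hgt k p - hgt k u :=
  (rel_formula k hk u p).1

/-- The positive cone `C_i` is cut out by the signs of the other two heights. -/
lemma inPos_iff {i k l : ℕ} (hi : i < 3) (hk : k < 3) (hl : l < 3) (hik : i ≠ k) (hil : i ≠ l)
    (hkl : k ≠ l) (u p : Pt) :
    inPos i u p ↔ hgt k p < hgt k u ∧ hgt l p < hgt l u := by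
  have h3 : Real.sqrt 3 * Real.sqrt 3 = 3 := Real.mul_self_sqrt (by norm_num)
  have hpos : 0 < Real.sqrt 3 := Real.sqrt_pos.mpr (by norm_num)
  obtain ⟨e2, e0, e1, e3⟩ := rel_formula i hi u p
  have key : inPos i u p ↔ Real.sqrt 3 * (rel i u p).1 < (rel i u p).2 ∧
      -(Real.sqrt 3 * (rel i u p).1) < (rel i u p).2 := by
    unfold inPos
    rw [← abs_of_pos hpos, ← abs_mul, abs_lt, abs_of_pos hpos]
    constructor <;> rintro ⟨h1, h2⟩ <;> constructor <;> linarith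
  rw [key, e2]
  interval_cases i <;> interval_cases k <;> interval_cases l <;> first | omega | skip
  all_goals
    first | rw [e0 rfl] | rw [e1 rfl] | rw [e3 rfl]
    simp [hgt]
    constructor <;> rintro ⟨h1, h2⟩ <;> constructor <;> nlinarith

lemma hgt_sum {i k l : ℕ} (hi : i < 3) (hk : k < 3) (hl : l < 3) (hik : i ≠ k) (hil : i ≠ l)
    (hkl : k ≠ l) (p : Pt) : hgt i p + hgt k p + hgt l p = 0 := by
  interval_cases i <;> interval_cases k <;> interval_cases l <;> first | omega | skip
  all_goals
    simp [hgt]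
    ring

lemma exists_others (i : ℕ) (hi : i < 3) :
    ∃ k l, k < 3 ∧ l < 3 ∧ i ≠ k ∧ i ≠ l ∧ k ≠ l := by
  interval_cases i
  · exact ⟨1, 2, by norm_num⟩
  · exact ⟨0, 2, by norm_num⟩
  · exact ⟨0, 1, by norm_num⟩

lemma cross_hgt {k l : ℕ} (hk : k < 3) (hl : l < 3) (hkl : k ≠ l) :
    ∃ κ : ℝ, κ ≠ 0 ∧ ∀ a b : Pt, crossP a b = κ * (hgt k a * hgt l b - hgt l a * hgt k b) := by
  have h3 : Real.sqrt 3 * Real.sqrt 3 = 3 := Real.mul_self_sqrt (by norm_num)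
  have hpos : 0 < Real.sqrt 3 := Real.sqrt_pos.mpr (by norm_num)
  have : ∃ ε : ℝ, ε ≠ 0 ∧ ∀ a b : Pt, crossP a b =
      (2 * ε / Real.sqrt 3) * (hgt k a * hgt l b - hgt l a * hgt k b) := by
    interval_cases k <;> interval_cases l <;> first | omega | skip
    · refine ⟨1, by norm_num, fun a b => ?_⟩
      simp [hgt, crossP]; field_simp; ring
    · refine ⟨-1, by norm_num, fun a b => ?_⟩
      simp [hgt, crossP]; field_simp; ring
    · refine ⟨-1, by norm_num, fun a b => ?_⟩
      simp [hgt, crossP]; field_simp; ring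
    · refine ⟨1, by norm_num, fun a b => ?_⟩
      simp [hgt, crossP]; field_simp; ring
    · refine ⟨1, by norm_num, fun a b => ?_⟩
      simp [hgt, crossP]; field_simp; ring
    · refine ⟨-1, by norm_num, fun a b => ?_⟩
      simp [hgt, crossP]; field_simp; ring
  obtain ⟨ε, h0, h⟩ := this
  exact ⟨_, by positivity, h⟩

lemma hgt_pt (k : ℕ) (a b : Pt) (τ : ℝ) : hgt k (pt a b τ) = (1 - τ) * hgt k a + τ * hgt k b := by
  unfold hgt pt
  split_ifs <;> simp <;> ring

lemma hgt_sub (k : ℕ) (a b : Pt) : hgt k (a - b) = hgt k a - hgt k b := by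
  unfold hgt
  split_ifs <;> simp <;> ring

lemma al_pt (q a w c d : Pt) (τ : ℝ) :
    al q a w (pt c d τ) = (1 - τ) * al q a w c + τ * al q a w d := by
  simp [al, pt, crossP]; ring

lemma cross_swap (a b : Pt) : crossP a b = -crossP b a := by simp [crossP]; ring

lemma cross_ne_swap {a b : Pt} (h : crossP a b ≠ 0) : crossP b a ≠ 0 := by
  rw [cross_swap]; exact neg_ne_zero.mpr h

/-- The expansion of `m` in the affine frame `q, a, w`. -/
lemma recon {q a w : Pt} (hD : crossP (a - q) (w - q) ≠ 0) (m : Pt) :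
    m = q + al q a w m • (a - q) + al q w a m • (w - q) := by
  have hD' := cross_ne_swap hD
  have : crossP (w - q) (a - q) = - crossP (a - q) (w - q) := cross_swap _ _
  unfold al
  rw [this]
  ext <;> simp <;> field_simp <;> simp [crossP] <;> ring

lemma al_eq {q a w m : Pt} {s t : ℝ} (hD : crossP (a - q) (w - q) ≠ 0)
    (h : m = q + s • (a - q) + t • (w - q)) : al q a w m = s := by
  unfold al
  rw [div_eq_iff hD, h]
  simp [crossP]; ring

lemma al_origin (q a w : Pt) : al q a w q = 0 := by simp [al, crossP]
lemma al_self {q a w : Pt} (hD : crossP (a - q) (w - q) ≠ 0) : al q a w a = 1 := by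
  simp [al, hD]
lemma al_other (q a w : Pt) : al q a w w = 0 := by
  simp [al, crossP]; left; ring

lemma hgt_recon {q a w : Pt} (hD : crossP (a - q) (w - q) ≠ 0) (k : ℕ) (m : Pt) :
    hgt k m = hgt k q + al q a w m * (hgt k a - hgt k q) + al q w a m * (hgt k w - hgt k q) := by
  have := congrArg (hgt k) (recon hD m)
  rw [this]
  generalize al q a w m = s
  generalize al q w a m = t
  unfold hgt
  split_ifs <;> simp <;> ring

/-- Equality of points is detected by the two frame coordinates. -/
lemma eq_of_al {q a w m n : Pt} (hD : crossP (a - q) (w - q) ≠ 0)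
    (h1 : al q a w m = al q a w n) (h2 : al q w a m = al q w a n) : m = n := by
  rw [recon hD m, recon hD n, h1, h2]

lemma cross_pt_line (a b : Pt) (τ : ℝ) : crossP (b - a) (pt a b τ - a) = 0 := by
  simp [crossP, pt]; ring

lemma PCross_iff (a b c d : Pt) : PCross a b c d ↔
    ∃ τ σ : ℝ, 0 < τ ∧ τ < 1 ∧ 0 < σ ∧ σ < 1 ∧ pt a b τ = pt c d σ := by
  constructor
  · rintro ⟨m, ⟨s, t, hs, ht, hst, h1⟩, ⟨s', t', hs', ht', hst', h2⟩⟩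
    refine ⟨t, t', ht, by linarith, ht', by linarith, ?_⟩
    simp only [pt]
    rw [show 1 - t = s by linarith, show 1 - t' = s' by linarith, h1, h2]
  · rintro ⟨τ, σ, h1, h2, h3, h4, h⟩
    refine ⟨pt a b τ, ⟨1 - τ, τ, by linarith, h1, by ring, rfl⟩, ?_⟩
    rw [h]
    exact ⟨1 - σ, σ, by linarith, h3, by ring, rfl⟩

lemma pt_comm (a b : Pt) (τ : ℝ) : pt a b τ = pt b a (1 - τ) := by
  simp [pt, add_comm]

lemma pt_zero (a b : Pt) : pt a b 0 = a := by simp [pt]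
lemma pt_one (a b : Pt) : pt a b 1 = b := by simp [pt]

lemma collinear_of_cross {p q r : Pt} (hpq : p ≠ q) (h : crossP (q - p) (r - p) = 0) :
    Collinear ℝ ({p, q, r} : Set Pt) := by
  have hn : (q.1 - p.1) ^ 2 + (q.2 - p.2) ^ 2 ≠ 0 := by
    intro h0
    apply hpq
    ext <;> nlinarith [sq_nonneg (q.1 - p.1), sq_nonneg (q.2 - p.2)]
  simp only [crossP, Prod.fst_sub, Prod.snd_sub] at h
  rw [collinear_iff_of_mem (p₀ := p) (by simp)]
  refine ⟨q - p, fun y hy => ?_⟩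
  simp only [mem_insert_iff, mem_singleton_iff] at hy
  rcases hy with rfl | rfl | rfl
  · exact ⟨0, by simp⟩
  · exact ⟨1, by simp⟩
  · refine ⟨((q.1 - p.1) * (y.1 - p.1) + (q.2 - p.2) * (y.2 - p.2)) /
      ((q.1 - p.1) ^ 2 + (q.2 - p.2) ^ 2), ?_⟩
    ext
    · simp
      field_simp
      linear_combination -(q.2 - p.2) * h
    · simp
      field_simp
      linear_combination (q.1 - p.1) * h

end CHT6

/-! ### Constraints, visibility and walls -/

namespace CHT6

/-- The standing hypotheses on the point set `P` and the constraint set `S`. -/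
structure Cfg (P : Set Pt) (S : Set (Pt × Pt)) : Prop where
  fin : P.Finite
  ends : ∀ c ∈ S, c.1 ∈ P ∧ c.2 ∈ P
  nc : ∀ c ∈ S, ∀ d ∈ S, c ≠ d → ¬ PCross c.1 c.2 d.1 d.2
  gp : GenPos P

variable {P : Set Pt} {S : Set (Pt × Pt)}

lemma Constr.symm {a b : Pt} (h : Constr S a b) : Constr S b a := Or.symm h

lemma Cfg.mem (C : Cfg P S) {a b : Pt} (h : Constr S a b) : a ∈ P ∧ b ∈ P := by
  rcases h with h | h
  · exact C.ends _ h
  · exact (C.ends _ h).symm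

lemma Cfg.cross_ne (C : Cfg P S) {p q r : Pt} (hp : p ∈ P) (hq : q ∈ P) (hr : r ∈ P)
    (h1 : p ≠ q) (h2 : q ≠ r) (h3 : p ≠ r) : crossP (q - p) (r - p) ≠ 0 :=
  fun h => C.gp.2 p hp q hq r hr h1 h2 h3 (collinear_of_cross h1 h)

lemma Cfg.hgt_ne (C : Cfg P S) {k : ℕ} (hk : k < 3) {p q : Pt} (hp : p ∈ P) (hq : q ∈ P)
    (h : p ≠ q) : hgt k p ≠ hgt k q := by
  obtain ⟨h0, h1, h2⟩ := C.gp.1 p hp q hq h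
  have h3 : Real.sqrt 3 * Real.sqrt 3 = 3 := Real.mul_self_sqrt (by norm_num)
  have hpos : 0 < Real.sqrt 3 := Real.sqrt_pos.mpr (by norm_num)
  interval_cases k <;> simp only [hgt] <;> norm_num
  · exact h0
  · intro h; apply h2; linarith
  · intro h; apply h1; linarith

/-- The line through `a` and `b` meets `P` in no third point. -/
lemma Cfg.not_on_line (C : Cfg P S) {a b c : Pt} (ha : a ∈ P) (hb : b ∈ P) (hc : c ∈ P)
    (hab : a ≠ b) {τ : ℝ} (h : c = pt a b τ) : c = a ∨ c = b := by
  by_contra! hne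
  exact C.cross_ne ha hb hc hab hne.2.symm hne.1.symm (by rw [h]; exact cross_pt_line a b τ)

lemma CanSee.symm {a b : Pt} (h : CanSee S a b) : CanSee S b a := by
  rcases h with h | h
  · exact Or.inl h.symm
  · right
    intro c hc hx
    apply h c hc
    unfold PCross at *
    rwa [openSegment_symm ℝ a b]

/-- A constraint that meets the relative interior of a visibility segment is that segment. -/
lemma Cfg.touch (C : Cfg P S) {a u c1 c2 : Pt} (ha : a ∈ P) (hu : u ∈ P) (hau : a ≠ u)
    (hs : CanSee S a u) (hc : Constr S c1 c2) {τ r : ℝ} (h0 : 0 ≤ τ) (h1 : τ ≤ 1) (hr0 : 0 < r)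
    (hr1 : r < 1) (h : pt c1 c2 τ = pt a u r) : (c1 = a ∧ c2 = u) ∨ (c1 = u ∧ c2 = a) := by
  have hne : pt a u r ≠ a ∧ pt a u r ≠ u := by
    constructor
    · intro h
      apply hau
      have e1 := congrArg Prod.fst h
      have e2 := congrArg Prod.snd h
      simp [pt] at e1 e2
      ext
      · have : r * (a.1 - u.1) = 0 := by linarith
        rcases mul_eq_zero.mp this with h | h <;> linarith
      · have : r * (a.2 - u.2) = 0 := by linarith
        rcases mul_eq_zero.mp this with h | h <;> linarith
    · intro h
      apply hau
      have e1 := congrArg Prod.fst h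
      have e2 := congrArg Prod.snd h
      simp [pt] at e1 e2
      ext
      · have : (1 - r) * (a.1 - u.1) = 0 := by linarith
        rcases mul_eq_zero.mp this with h | h <;> linarith
      · have : (1 - r) * (a.2 - u.2) = 0 := by linarith
        rcases mul_eq_zero.mp this with h | h <;> linarith
  obtain ⟨m1, m2⟩ := C.mem hc
  rcases h0.eq_or_lt with rfl | h0
  · rw [pt_zero] at h
    rcases C.not_on_line ha hu m1 hau h with h' | h'
    · exact absurd (h.symm.trans h') hne.1
    · exact absurd (h.symm.trans h') hne.2
  rcases h1.eq_or_lt with rfl | h1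
  · rw [pt_one] at h
    rcases C.not_on_line ha hu m2 hau h with h' | h'
    · exact absurd (h.symm.trans h') hne.1
    · exact absurd (h.symm.trans h') hne.2
  have hx : PCross c1 c2 a u := (PCross_iff _ _ _ _).2 ⟨τ, r, h0, h1, hr0, hr1, h⟩
  have hx' : PCross c2 c1 a u := by unfold PCross at *; rwa [openSegment_symm]
  have hy : PCross c1 c2 u a := by
    unfold PCross at *; rwa [openSegment_symm ℝ u a]
  have hy' : PCross c2 c1 u a := by
    unfold PCross at *; rwa [openSegment_symm ℝ u a]
  rcases hs with hs | hs
  · rcases hc with hc | hc <;> rcases hs with hs | hs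
    · by_cases e : (c1, c2) = (a, u)
      · left; simpa using e
      · exact absurd hx (C.nc _ hc _ hs e)
    · by_cases e : (c1, c2) = (u, a)
      · right; simpa using e
      · exact absurd hy (C.nc _ hc _ hs e)
    · by_cases e : (c2, c1) = (a, u)
      · right; simpa [and_comm] using e
      · exact absurd hx' (C.nc _ hc _ hs e)
    · by_cases e : (c2, c1) = (u, a)
      · left; simpa [and_comm] using e
      · exact absurd hy' (C.nc _ hc _ hs e)
  · rcases hc with hc | hc
    · exact absurd hx (hs _ hc)
    · exact absurd hx' (hs _ hc)

/-- No constraint that enters the open wedge at `q` spanned by `a` and `w` touches the two half-open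
sides `[q, a)` and `[q, w)`: such a constraint can leave the triangle `q a w` only across `a w`. -/
def Wall (S : Set (Pt × Pt)) (q a w : Pt) : Prop :=
  ∀ c1 c2, Constr S c1 c2 → ∀ τ τ' : ℝ, 0 ≤ τ → τ ≤ 1 → 0 ≤ τ' → τ' ≤ 1 →
    0 < al q a w (pt c1 c2 τ) → 0 < al q w a (pt c1 c2 τ) →
    (al q w a (pt c1 c2 τ') = 0 → 0 ≤ al q a w (pt c1 c2 τ') → 1 ≤ al q a w (pt c1 c2 τ')) ∧
    (al q a w (pt c1 c2 τ') = 0 → 0 ≤ al q w a (pt c1 c2 τ') → 1 ≤ al q w a (pt c1 c2 τ'))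

/-- Where a segment leaves the open positive quadrant. -/
lemma exit_real {a b a1 b1 : ℝ} (ha : 0 < a) (hb : 0 < b) (h : a1 ≤ 0 ∨ b1 ≤ 0) :
    ∃ θ, 0 < θ ∧ θ ≤ 1 ∧
      (((1 - θ) * a + θ * a1 = 0 ∧ 0 ≤ (1 - θ) * b + θ * b1) ∨
       ((1 - θ) * b + θ * b1 = 0 ∧ 0 ≤ (1 - θ) * a + θ * a1)) := by
  by_cases hc : a * b1 ≥ b * a1 ∧ a1 ≤ 0
  · obtain ⟨hc, h1⟩ := hc
    have hd : 0 < a - a1 := by linarith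
    refine ⟨a / (a - a1), by positivity, by rw [div_le_one hd]; linarith, Or.inl ⟨?_, ?_⟩⟩
    · field_simp; ring
    · rw [show (1 - a / (a - a1)) * b + a / (a - a1) * b1 = (a * b1 - b * a1) / (a - a1) by
        field_simp; ring]
      apply div_nonneg <;> linarith
  · have h2 : b1 ≤ 0 ∧ a * b1 ≤ b * a1 := by
      by_cases hb1 : b1 ≤ 0
      · refine ⟨hb1, ?_⟩
        by_contra! hlt
        apply hc
        refine ⟨hlt.le, ?_⟩
        nlinarith
      · exfalso
        push Not at hb1
        have ha1 : a1 ≤ 0 := by rcases h with h | h <;> linarith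
        exact hc ⟨by nlinarith, ha1⟩
    obtain ⟨h1, hc⟩ := h2
    have hd : 0 < b - b1 := by linarith
    refine ⟨b / (b - b1), by positivity, by rw [div_le_one hd]; linarith, Or.inr ⟨?_, ?_⟩⟩
    · field_simp; ring
    · rw [show (1 - b / (b - b1)) * a + b / (b - b1) * a1 = (b * a1 - a * b1) / (b - b1) by
        field_simp; ring]
      apply div_nonneg <;> linarith

lemma pt_pt (a b : Pt) (τ θ : ℝ) : pt (pt a b τ) b θ = pt a b ((1 - θ) * τ + θ) := by
  ext <;> simp [pt] <;> ring

/-- Following a constraint from a point of the open wedge of a wall to its end, one either stays in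
the wedge or leaves it beyond the two sides of the wall. -/
lemma Wall.exit {q a w c1 c2 : Pt} (W : Wall S q a w) (hc : Constr S c1 c2) {τ : ℝ}
    (h0 : 0 ≤ τ) (h1 : τ ≤ 1) (hA : 0 < al q a w (pt c1 c2 τ)) (hB : 0 < al q w a (pt c1 c2 τ)) :
    (0 < al q a w c2 ∧ 0 < al q w a c2) ∨ ∃ θ, 0 < θ ∧ θ ≤ 1 ∧
      (((1 - θ) * al q a w (pt c1 c2 τ) + θ * al q a w c2 = 0 ∧
        1 ≤ (1 - θ) * al q w a (pt c1 c2 τ) + θ * al q w a c2) ∨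
       ((1 - θ) * al q w a (pt c1 c2 τ) + θ * al q w a c2 = 0 ∧
        1 ≤ (1 - θ) * al q a w (pt c1 c2 τ) + θ * al q a w c2)) := by
  by_cases hpos : 0 < al q a w c2 ∧ 0 < al q w a c2
  · exact Or.inl hpos
  right
  obtain ⟨θ, t0, t1, h⟩ := exit_real hA hB (by
    by_contra! hh; exact hpos hh)
  refine ⟨θ, t0, t1, ?_⟩
  obtain ⟨w1, w2⟩ := W c1 c2 hc τ ((1 - θ) * τ + θ) h0 h1 (by nlinarith) (by nlinarith) hA hB
  rw [← pt_pt, al_pt, al_pt _ _ _ (pt c1 c2 τ)] at w1 w2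
  rcases h with ⟨e, h⟩ | ⟨e, h⟩
  · exact Or.inl ⟨e, w2 e h⟩
  · exact Or.inr ⟨e, w1 e h⟩

/-- `a` adds the edge `au` in its positive cone `C_j`. -/
def EdgeTo (P : Set Pt) (S : Set (Pt × Pt)) (j : ℕ) (a u : Pt) : Prop :=
  a ∈ P ∧ u ∈ P ∧ inPos j a u ∧ CanSee S a u ∧
    ∀ w ∈ P, inPos j a w → CanSee S a w → SameSubPos S j a u w → hgt j u ≤ hgt j w

lemma exists_third {i j : ℕ} (hi : i < 3) (hj : j < 3) (hij : i ≠ j) :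
    ∃ k < 3, i ≠ k ∧ j ≠ k :=
  ⟨3 - i - j, by omega, by omega, by omega⟩

lemma inPos_unique {i j : ℕ} (hi : i < 3) (hj : j < 3) {u p : Pt} (h1 : inPos i u p)
    (h2 : inPos j u p) : i = j := by
  by_contra hne
  obtain ⟨k, hk, hik, hjk⟩ : ∃ k < 3, i ≠ k ∧ j ≠ k := exists_third hi hj hne
  rw [inPos_iff hi hj hk hne hik hjk] at h1
  rw [inPos_iff hj hi hk (Ne.symm hne) hjk hik] at h2
  have e1 := hgt_sum hi hj hk hne hik hjk u
  have e2 := hgt_sum hi hj hk hne hik hjk p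
  linarith [h1.1, h1.2, h2.1, h2.2]

lemma not_inPos_both {i j : ℕ} (hi : i < 3) (hj : j < 3) {u p : Pt} (h1 : inPos i u p)
    (h2 : inPos j p u) : False := by
  obtain ⟨k, l, hk, hl, hjk, hjl, hkl⟩ := exists_others j hj
  rw [inPos_iff hj hk hl hjk hjl hkl] at h2
  by_cases hij : i = j
  · subst hij
    rw [inPos_iff hj hk hl hjk hjl hkl] at h1
    linarith [h1.1, h2.1]
  · obtain ⟨m, hm, him, hjm⟩ : ∃ k < 3, i ≠ k ∧ j ≠ k := exists_third hi hj hij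
    rw [inPos_iff hi hj hm hij him hjm] at h1
    have : m = k ∨ m = l := by omega
    rcases this with rfl | rfl <;> linarith [h1.2, h2.1, h2.2]

lemma inPos_ne {i : ℕ} (hi : i < 3) {u p : Pt} (h : inPos i u p) : u ≠ p := by
  rintro rfl
  exact not_inPos_both hi hi h h

lemma inPos_hgt {i : ℕ} (hi : i < 3) {u p : Pt} (h : inPos i u p) : hgt i u < hgt i p := by
  obtain ⟨k, l, hk, hl, hik, hil, hkl⟩ := exists_others i hi
  rw [inPos_iff hi hk hl hik hil hkl] at h
  linarith [h.1, h.2, hgt_sum hi hk hl hik hil hkl u, hgt_sum hi hk hl hik hil hkl p]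

lemma CanonVert.edgeTo {j : ℕ} (hj : j < 3) {u a : Pt} (h : CanonVert P S j u a) :
    EdgeTo P S j a u := by
  obtain ⟨hm, hE, hn⟩ := h
  unfold inNeg at hn
  rcases hE with ⟨_, _, i, hi, hp, _⟩ | ⟨ha, hu, i, hi, hp, hs, hmin⟩
  · exact (not_inPos_both hi hj hp hn).elim
  · obtain rfl := inPos_unique hi hj hp hn
    refine ⟨ha, hu, hp, hs, fun w hw hpw hsw hsub => ?_⟩
    have := hmin w hw (inPos_ne hi hpw).symm hpw hsw hsub
    rw [projLen_eq hi, projLen_eq hi] at this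
    linarith

lemma EdgeTo.canonVert {j : ℕ} (hj : j < 3) {u a : Pt} (h : EdgeTo P S j a u) :
    CanonVert P S j u a := by
  obtain ⟨ha, hu, hp, hs, hmin⟩ := h
  refine ⟨ha, Or.inr ⟨ha, hu, j, hj, hp, hs, fun w hw _ hpw hsw hsub => ?_⟩, hp⟩
  rw [projLen_eq hj, projLen_eq hj]
  linarith [hmin w hw hpw hsw hsub]

end CHT6

/-! ### The sweeping argument -/

namespace CHT6

variable {P : Set Pt} {S : Set (Pt × Pt)}

/-- Cross products in the coordinates of the frame `q, a, w`. -/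
lemma cross_coord {q a w : Pt} (hD : crossP (a - q) (w - q) ≠ 0) (p m n : Pt) :
    crossP (m - p) (n - p) = crossP (a - q) (w - q) *
      ((al q a w m - al q a w p) * (al q w a n - al q w a p) -
       (al q w a m - al q w a p) * (al q a w n - al q a w p)) := by
  have hp := recon hD p
  have hm := recon hD m
  have hn := recon hD n
  generalize al q a w p = s1 at *
  generalize al q w a p = t1 at *
  generalize al q a w m = s2 at *
  generalize al q w a m = t2 at *
  generalize al q a w n = s3 at *
  generalize al q w a n = t3 at *
  subst hp hm hn
  simp [crossP]; ring

lemma convex_lt {s t x y z b : ℝ} (hs : 0 ≤ s) (ht : 0 < t) (hst : s + t ≤ 1) (hx : x ≤ b)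
    (hy : y < b) (hz : z ≤ b) : x + s * (z - x) + t * (y - x) < b := by
  nlinarith [mul_nonneg hs (sub_nonneg.2 hz), mul_pos ht (sub_pos.2 hy),
    mul_nonneg (sub_nonneg.2 hst) (sub_nonneg.2 hx)]

/-- If the sides `[q, a)` and `[q, w)` of a triangle are walls, `q` lies on the edge from `a` to its
chosen neighbour `u`, and `w` is a point of the cone lower than `u`, then rotating a ray about `a`
away from `au` the first point `z ∈ P` met inside the triangle is visible from `a` and lies in the
subcone of `u`, so `a` would have preferred `z` to `u`. -/
lemma Cfg.sweep (C : Cfg P S) {j : ℕ} (hj : j < 3) {a u q w : Pt} {r : ℝ} (h : EdgeTo P S j a u)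
    (hr0 : 0 < r) (hr1 : r ≤ 1) (hq : q = pt a u r) (W : Wall S q a w) (hw : w ∈ P)
    (hwp : inPos j a w) (hlt : hgt j w < hgt j u) (hD : crossP (a - q) (w - q) ≠ 0) : False := by
  obtain ⟨ha, hu, hp, hs, hmin⟩ := h
  have hD' := cross_ne_swap hD
  obtain ⟨z, ⟨hz, hBz, hAz, hABz⟩, hzmin⟩ := Set.exists_min_image
    {z ∈ P | 0 < al q w a z ∧ 0 ≤ al q a w z ∧ al q a w z + al q w a z ≤ 1}
    (fun z => al q w a z / (1 - al q a w z)) (C.fin.subset (fun z hz => hz.1))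
    ⟨w, hw, by rw [al_self hD']; norm_num, by rw [al_other], by rw [al_self hD', al_other]; norm_num⟩
  have hzmin' : ∀ m ∈ P, 0 < al q w a m → 0 ≤ al q a w m → al q a w m + al q w a m ≤ 1 →
      al q w a z * (1 - al q a w m) ≤ al q w a m * (1 - al q a w z) := by
    intro m hm h1 h2 h3
    have := hzmin m ⟨hm, h1, h2, h3⟩
    rwa [div_le_div_iff₀ (by linarith) (by linarith)] at this
  -- No constraint can enter the part of the triangle swept before reaching `z`.
  have noC : ∀ c1 c2 τ, Constr S c1 c2 → 0 ≤ τ → τ ≤ 1 →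
      0 < al q a w (pt c1 c2 τ) → 0 < al q w a (pt c1 c2 τ) →
      al q w a (pt c1 c2 τ) * (1 - al q a w z) ≤ al q w a z * (1 - al q a w (pt c1 c2 τ)) →
      al q w a c2 * (1 - al q a w z) < al q w a z * (1 - al q a w c2) → False := by
    intro c1 c2 τ hc h0 h1 hA hB hL hL2
    rcases W.exit hc h0 h1 hA hB with ⟨hA2, hB2⟩ | ⟨θ, t0, t1, hθ⟩
    · have := hzmin' c2 (C.mem hc).2 hB2 hA2.le (by
        by_contra! hgt
        by_cases h1 : 0 ≤ 1 - al q a w c2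
        · nlinarith
        · nlinarith)
      linarith
    · generalize al q a w (pt c1 c2 τ) = α at *
      generalize al q w a (pt c1 c2 τ) = β at *
      have hn : ((1 - θ) * β + θ * al q w a c2) * (1 - al q a w z) <
          al q w a z * (1 - ((1 - θ) * α + θ * al q a w c2)) := by
        nlinarith [mul_le_mul_of_nonneg_left hL (by linarith : 0 ≤ 1 - θ),
          mul_lt_mul_of_pos_left hL2 t0]
      rcases hθ with ⟨e, h⟩ | ⟨e, h⟩
      · rw [e] at hn; nlinarith
      · rw [e] at hn; nlinarith
  have hne : a ≠ z := by
    rintro rfl; rw [al_other] at hBz; exact lt_irrefl _ hBz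
  have onl : ∀ c ∈ P, al q w a c * (1 - al q a w z) = al q w a z * (1 - al q a w c) →
      c = a ∨ c = z := by
    intro c hc hL
    by_contra! hh
    apply C.cross_ne ha hz hc hne hh.2.symm hh.1.symm
    rw [cross_coord hD, al_self hD, al_other]
    linear_combination -crossP (a - q) (w - q) * hL
  have hsee : CanSee S a z := by
    by_cases hcz : Constr S a z
    · exact Or.inl hcz
    right
    intro c hc hx
    obtain ⟨τ, σ, t0, t1, s0, s1, hm⟩ := (PCross_iff _ _ _ _).1 hx
    have hC : Constr S c.1 c.2 := Or.inl hc
    have hmA : al q a w (pt c.1 c.2 τ) = (1 - σ) + σ * al q a w z := by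
      rw [hm, al_pt, al_self hD]; ring
    have hmB : al q w a (pt c.1 c.2 τ) = σ * al q w a z := by
      rw [hm, al_pt, al_other]; ring
    have hA : 0 < al q a w (pt c.1 c.2 τ) := by rw [hmA]; nlinarith
    have hB : 0 < al q w a (pt c.1 c.2 τ) := by rw [hmB]; positivity
    have hL : al q w a (pt c.1 c.2 τ) * (1 - al q a w z) =
        al q w a z * (1 - al q a w (pt c.1 c.2 τ)) := by rw [hmA, hmB]; ring
    have n2 := not_lt.1 (noC c.1 c.2 τ hC t0.le t1.le hA hB hL.le)
    have n1 := noC c.2 c.1 (1 - τ) hC.symm (by linarith) (by linarith)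
    rw [← pt_comm] at n1
    have n1 := not_lt.1 (n1 hA hB hL.le)
    rw [al_pt, al_pt] at hL
    have e1 : al q w a c.1 * (1 - al q a w z) = al q w a z * (1 - al q a w c.1) := by
      refine le_antisymm ?_ n1
      nlinarith [mul_le_mul_of_nonneg_left n2 t0.le]
    have e2 : al q w a c.2 * (1 - al q a w z) = al q w a z * (1 - al q a w c.2) := by
      refine le_antisymm ?_ n2
      nlinarith [mul_le_mul_of_nonneg_left n1 (by linarith : 0 ≤ 1 - τ)]
    rw [al_pt] at hmB
    rcases onl _ (C.mem hC).1 e1 with f1 | f1 <;> rcases onl _ (C.mem hC).2 e2 with f2 | f2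
    · rw [f1, f2, al_other] at hmB; nlinarith
    · rw [f1, f2] at hC; exact hcz hC
    · rw [f1, f2] at hC; exact hcz hC.symm
    · rw [f1, f2] at hmB; nlinarith
  obtain ⟨k, l, hk, hl, hjk, hjl, hkl⟩ := exists_others j hj
  have hH : ∀ m, hgt m q = (1 - r) * hgt m a + r * hgt m u := fun m => by rw [hq, hgt_pt]
  have hau := inPos_hgt hj hp
  rw [inPos_iff hj hk hl hjk hjl hkl] at hp hwp
  have below : ∀ m, hgt m u < hgt m a → hgt m w < hgt m a → hgt m z < hgt m a := by
    intro m h1 h2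
    rw [hgt_recon hD m z]
    exact convex_lt hAz hBz hABz (by rw [hH]; nlinarith) h2 le_rfl
  have hzp : inPos j a z := by
    rw [inPos_iff hj hk hl hjk hjl hkl]
    exact ⟨below k hp.1 hwp.1, below l hp.2 hwp.2⟩
  have hzu : hgt j z < hgt j u := by
    rw [hgt_recon hD j z]
    exact convex_lt hAz hBz hABz (by rw [hH]; nlinarith) hlt hau.le
  refine absurd (hmin z hz hzp hsee ?_) (not_le.2 hzu)
  intro c hc hcone hneg
  have ec : crossP (c - a) (u - a) * r = crossP (a - q) (w - q) * al q w a c := by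
    have : crossP (c - a) (u - a) * r = crossP (c - a) (q - a) := by
      rw [hq]; simp [crossP, pt]; ring
    rw [this, cross_coord hD, al_self hD, al_other, al_origin, al_origin]; ring
  have ez : crossP (c - a) (z - a) = crossP (a - q) (w - q) *
      (al q w a c * (1 - al q a w z) - al q w a z * (1 - al q a w c)) := by
    rw [cross_coord hD, al_self hD, al_other]; ring
  have hprod : al q w a c * (al q w a c * (1 - al q a w z) - al q w a z * (1 - al q a w c)) < 0 := by
    have h1 := mul_neg_of_neg_of_pos hneg hr0
    have h2 : crossP (c - a) (u - a) * crossP (c - a) (z - a) * r =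
        (crossP (a - q) (w - q)) ^ 2 *
        (al q w a c * (al q w a c * (1 - al q a w z) - al q w a z * (1 - al q a w c))) := by
      rw [ez]
      linear_combination crossP (a - q) (w - q) *
        (al q w a c * (1 - al q a w z) - al q w a z * (1 - al q a w c)) * ec
    rw [h2] at h1
    by_contra! h3
    have := mul_nonneg (sq_nonneg (crossP (a - q) (w - q))) h3
    linarith
  rcases mul_neg_iff.1 hprod with ⟨hB, hL⟩ | ⟨hB, hL⟩
  · -- A point of the constraint `ac` close to `a`.
    have hε : ∃ ε, 0 < ε ∧ ε ≤ 1 ∧ 0 < 1 - ε * (1 - al q a w c) := by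
      by_cases h : 1 - al q a w c ≤ 0
      · exact ⟨1, by norm_num, le_rfl, by linarith⟩
      · push Not at h
        refine ⟨1 / (1 + (1 - al q a w c)), by positivity, ?_, ?_⟩
        · rw [div_le_one (by linarith)]; linarith
        · rw [show 1 - 1 / (1 + (1 - al q a w c)) * (1 - al q a w c) =
            1 / (1 + (1 - al q a w c)) by field_simp; ring]
          positivity
    obtain ⟨ε, e0, e1, e2⟩ := hε
    have hmA : al q a w (pt a c ε) = 1 - ε * (1 - al q a w c) := by
      rw [al_pt, al_self hD]; ring
    have hmB : al q w a (pt a c ε) = ε * al q w a c := by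
      rw [al_pt, al_other]; ring
    exact noC a c ε hc e0.le e1 (by rw [hmA]; exact e2) (by rw [hmB]; positivity)
      (by rw [hmA, hmB]; nlinarith) (by linarith)
  · -- Here `c` would lie in the negative cone of `a`.
    rw [inPos_iff hj hk hl hjk hjl hkl] at hcone hzp
    have hc0 := hcone.1
    have hz0 := hzp.1
    have hq0 : hgt k q < hgt k a := by rw [hH]; nlinarith [hp.1]
    have e1 := hgt_recon hD k c
    have e2 := hgt_recon hD k z
    have key : al q w a z * (hgt k c - hgt k a) = al q w a c * (hgt k z - hgt k a) +
        -(al q w a c * (1 - al q a w z) - al q w a z * (1 - al q a w c)) *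
        (hgt k q - hgt k a) := by
      rw [e1, e2]; ring
    nlinarith [mul_pos_of_neg_of_neg hB (sub_neg.2 hz0), mul_pos hL (sub_pos.2 hq0),
      mul_pos hBz (sub_pos.2 hc0)]

end CHT6

/-! ### Neighbouring canonical vertices span empty triangles -/

namespace CHT6

variable {P : Set Pt} {S : Set (Pt × Pt)}

/-- The edge from `a` to its chosen neighbour `u` cannot be crossed by a visibility segment `pw` for
which `w` lies in the same cone of `a` and is lower than `u`. -/
lemma Cfg.block (C : Cfg P S) {j : ℕ} (hj : j < 3) {a u p w : Pt} {r s : ℝ} (h : EdgeTo P S j a u)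
    (hp : p ∈ P) (hw : w ∈ P) (hpw : p ≠ w) (hsee : CanSee S p w) (hr0 : 0 < r) (hr1 : r < 1)
    (hs0 : 0 < s) (hs1 : s < 1) (hq : pt a u r = pt p w s)
    (hwp : inPos j a w) (hlt : hgt j w < hgt j u) : False := by
  obtain ⟨ha, hu, hau', hsau, -⟩ := id h
  have hau := inPos_ne hj hau'
  have haw := inPos_ne hj hwp
  have huw : u ≠ w := by rintro rfl; exact lt_irrefl _ hlt
  obtain ⟨q, hq1⟩ : ∃ q, q = pt a u r := ⟨_, rfl⟩
  have hq2 : q = pt p w s := hq1.trans hq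
  have hD : crossP (a - q) (w - q) ≠ 0 := by
    have : crossP (a - q) (w - q) = -r * crossP (u - a) (w - a) := by
      rw [hq1]; simp [crossP, pt]; ring
    rw [this]
    exact mul_ne_zero (by linarith) (C.cross_ne ha hu hw hau huw haw)
  have hD' := cross_ne_swap hD
  have Au : 0 = (1 - r) + r * al q a w u := by
    have := al_pt q a w a u r
    rwa [← hq1, al_origin, al_self hD, mul_one] at this
  have Bu : al q w a u = 0 := by
    have := al_pt q w a a u r
    rw [← hq1, al_origin, al_other, mul_zero, zero_add] at this
    exact (mul_eq_zero.1 this.symm).resolve_left hr0.ne'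
  have Ap : al q a w p = 0 := by
    have := al_pt q a w p w s
    rw [← hq2, al_origin, al_other, mul_zero, add_zero] at this
    exact (mul_eq_zero.1 this.symm).resolve_left (by linarith)
  have Bp : 0 = (1 - s) * al q w a p + s := by
    have := al_pt q w a p w s
    rwa [← hq2, al_origin, al_self hD', mul_one] at this
  refine C.sweep hj h hr0 hr1.le hq1 ?_ hw hwp hlt hD
  intro c1 c2 hc τ τ' h0 h1 h0' h1' hA hB
  constructor
  · intro e1 e2
    by_contra! e3
    have hn : pt c1 c2 τ' = pt a u (r * (1 - al q a w (pt c1 c2 τ'))) := by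
      apply eq_of_al hD
      · generalize al q a w (pt c1 c2 τ') = x
        rw [al_pt, al_self hD]
        linear_combination (1 - x) * Au
      · rw [e1, al_pt, al_other, Bu]; ring
    rw [al_pt] at hB
    rcases C.touch ha hu hau hsau hc h0' h1' (by nlinarith) (by nlinarith) hn with
      ⟨rfl, rfl⟩ | ⟨rfl, rfl⟩
    · rw [al_other, Bu] at hB; linarith
    · rw [al_other, Bu] at hB; linarith
  · intro e1 e2
    by_contra! e3
    have hn : pt c1 c2 τ' = pt p w (s + al q w a (pt c1 c2 τ') * (1 - s)) := by
      apply eq_of_al hD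
      · rw [e1, al_pt, al_other, Ap]; ring
      · generalize al q w a (pt c1 c2 τ') = x
        rw [al_pt, al_self hD']
        linear_combination (1 - x) * Bp
    rw [al_pt] at hA
    rcases C.touch hp hw hpw hsee hc h0' h1' (by nlinarith) (by nlinarith) hn with
      ⟨rfl, rfl⟩ | ⟨rfl, rfl⟩
    · rw [al_other, Ap] at hA; linarith
    · rw [al_other, Ap] at hA; linarith

/-- `a` and `b` are neighbouring canonical vertices of `u` in the negative cone `C̄_j`, in no
particular order: the open wedge at `u` between them contains neither a canonical vertex of `u` nor a
constraint at `u`. -/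
structure Gap (P : Set Pt) (S : Set (Pt × Pt)) (j : ℕ) (u a b : Pt) : Prop where
  ea : EdgeTo P S j a u
  eb : EdgeTo P S j b u
  hD : crossP (a - u) (b - u) ≠ 0
  no_canon : ∀ y ∈ P, 0 < al u a b y → 0 < al u b a y → ¬ EdgeTo P S j y u
  no_constr : ∀ z, Constr S u z → 0 < al u a b z → 0 < al u b a z → False

lemma Gap.symm {j : ℕ} {u a b : Pt} (G : Gap P S j u a b) : Gap P S j u b a :=
  ⟨G.eb, G.ea, cross_ne_swap G.hD, fun y hy h1 h2 => G.no_canon y hy h2 h1,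
    fun z hz h1 h2 => G.no_constr z hz h2 h1⟩

lemma wedge_inPos {j : ℕ} (hj : j < 3) {u a b y : Pt} (hD : crossP (a - u) (b - u) ≠ 0)
    (ha : inPos j a u) (hb : inPos j b u) (h1 : 0 < al u a b y) (h2 : 0 < al u b a y) :
    inPos j y u := by
  obtain ⟨k, l, hk, hl, hjk, hjl, hkl⟩ := exists_others j hj
  rw [inPos_iff hj hk hl hjk hjl hkl] at *
  constructor
  · rw [hgt_recon hD k y]
    nlinarith [mul_pos h1 (sub_pos.2 ha.1), mul_pos h2 (sub_pos.2 hb.1)]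
  · rw [hgt_recon hD l y]
    nlinarith [mul_pos h1 (sub_pos.2 ha.2), mul_pos h2 (sub_pos.2 hb.2)]

lemma Gap.of_consec {j : ℕ} (hj : j < 3) {u a b : Pt} (h : ConsecCanon P S j u a b) :
    Gap P S j u a b := by
  obtain ⟨ha, hb, hsub, hpos, hno⟩ := h
  have hD := hpos.ne'
  have ea := ha.edgeTo hj
  have eb := hb.edgeTo hj
  have ca : ∀ z, crossP (z - u) (a - u) = -(crossP (a - u) (b - u) * al u b a z) := fun z => by
    rw [cross_coord hD, al_self hD, al_other, al_origin, al_origin]; ring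
  have cb : ∀ z, crossP (z - u) (b - u) = crossP (a - u) (b - u) * al u a b z := fun z => by
    rw [cross_coord hD, al_self (cross_ne_swap hD), al_other, al_origin, al_origin]; ring
  have noc : ∀ z, Constr S u z → 0 < al u a b z → 0 < al u b a z → False := by
    intro z hz h1 h2
    refine hsub z hz (wedge_inPos hj hD ea.2.2.1 eb.2.2.1 h1 h2) ?_
    rw [ca z, cb z]
    nlinarith [mul_pos (mul_pos hpos h1) (mul_pos hpos h2)]
  refine ⟨ea, eb, hD, fun y hy h1 h2 hE => ?_, noc⟩
  refine hno y hy (hE.canonVert hj) ?_ ⟨?_, ?_⟩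
  · intro z hz hcone hneg
    rw [ca z, cross_coord hD u z y, al_origin, al_origin] at hneg
    have h3 : 0 < al u b a z * (al u a b z * al u b a y - al u b a z * al u a b y) := by
      by_contra! h3
      have := mul_nonneg (sq_nonneg (crossP (a - u) (b - u))) (neg_nonneg.2 h3)
      nlinarith
    rcases mul_pos_iff.1 h3 with ⟨h4, h5⟩ | ⟨h4, h5⟩
    · refine noc z hz ?_ h4
      by_contra! h6
      nlinarith [mul_pos h4 h1]
    · have h6 : al u a b z < 0 := by
        by_contra! h6
        nlinarith [mul_pos_of_neg_of_neg h4 (neg_lt_zero.2 h1)]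
      obtain ⟨k, l, hk, hl, hjk, hjl, hkl⟩ := exists_others j hj
      have pa := ea.2.2.1
      have pb := eb.2.2.1
      unfold inNeg at hcone
      rw [inPos_iff hj hk hl hjk hjl hkl] at hcone pa pb
      have := hgt_recon hD k z
      nlinarith [mul_pos_of_neg_of_neg h6 (sub_neg.2 pa.1), mul_pos_of_neg_of_neg h4
        (sub_neg.2 pb.1), hcone.1]
  · have := ca y
    rw [cross_swap, this, neg_neg]; positivity
  · rw [cb]; positivity

lemma Gap.wall (C : Cfg P S) {j : ℕ} (hj : j < 3) {u a b : Pt} (G : Gap P S j u a b) :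
    Wall S u a b := by
  -- The apex `u` is not on a constraint entering the wedge.
  have apex : ∀ c1 c2, Constr S c1 c2 → ∀ τ τ' : ℝ, 0 ≤ τ → τ ≤ 1 → 0 ≤ τ' → τ' ≤ 1 →
      0 < al u a b (pt c1 c2 τ) → 0 < al u b a (pt c1 c2 τ) → pt c1 c2 τ' ≠ u := by
    intro c1 c2 hc τ τ' h0 h1 h0' h1' hA hB hn
    obtain ⟨m1, m2⟩ := C.mem hc
    rw [al_pt] at hA hB
    by_cases f1 : u = c1
    · subst f1
      rw [al_origin] at hA hB
      exact G.no_constr c2 hc (by by_contra! hh; nlinarith) (by by_contra! hh; nlinarith)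
    by_cases f2 : u = c2
    · subst f2
      rw [al_origin] at hA hB
      exact G.no_constr c1 hc.symm (by by_contra! hh; nlinarith) (by by_contra! hh; nlinarith)
    by_cases f3 : c1 = c2
    · subst f3
      apply f1
      rw [← hn]; simp [pt, ← add_smul]
    · rcases C.not_on_line m1 m2 G.ea.2.1 f3 hn.symm with h | h
      · exact f1 h
      · exact f2 h
  -- No constraint entering the wedge meets one of its two bounding edges.
  have side : ∀ a b, Gap P S j u a b → (∀ c1 c2, Constr S c1 c2 → ∀ τ τ' : ℝ, 0 ≤ τ → τ ≤ 1 →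
      0 ≤ τ' → τ' ≤ 1 →
      0 < al u b a (pt c1 c2 τ) → pt c1 c2 τ' ≠ u →
      al u b a (pt c1 c2 τ') = 0 → 0 ≤ al u a b (pt c1 c2 τ') → 1 ≤ al u a b (pt c1 c2 τ')) := by
    intro a b G c1 c2 hc τ τ' h0 h1 h0' h1' hB hne e1 e2
    by_contra! e3
    have hD := G.hD
    have e2 : 0 < al u a b (pt c1 c2 τ') := by
      refine lt_of_le_of_ne e2 fun e => hne ?_
      apply eq_of_al hD
      · rw [al_origin, e]
      · rw [al_origin, e1]
    have hn : pt c1 c2 τ' = pt u a (al u a b (pt c1 c2 τ')) := by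
      apply eq_of_al hD
      · generalize al u a b (pt c1 c2 τ') = x
        rw [al_pt, al_self hD, al_origin]; ring
      · rw [e1, al_pt, al_other, al_origin]; ring
    rw [al_pt] at hB
    rcases C.touch G.ea.2.1 G.ea.1 (inPos_ne hj G.ea.2.2.1).symm G.ea.2.2.2.1.symm hc h0' h1' e2 e3
      hn with ⟨rfl, rfl⟩ | ⟨rfl, rfl⟩
    · rw [al_other, al_origin] at hB; linarith
    · rw [al_other, al_origin] at hB; linarith
  intro c1 c2 hc τ τ' h0 h1 h0' h1' hA hB
  have hne := apex c1 c2 hc τ τ' h0 h1 h0' h1' hA hB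
  exact ⟨side a b G c1 c2 hc τ τ' h0 h1 h0' h1' hB hne,
    side b a G.symm c1 c2 hc τ τ' h0 h1 h0' h1' hA hne⟩

/-- A neighbouring canonical vertex `b` of `a` is not in the cone `C_j` of `a`: as `b` is lower than
`u`, sweeping would apply. -/
lemma Gap.notIn (C : Cfg P S) {j : ℕ} (hj : j < 3) {u a b : Pt} (G : Gap P S j u a b) :
    ¬ inPos j a b := fun h =>
  C.sweep hj G.ea one_pos le_rfl (pt_one a u).symm (G.wall C hj) G.eb.1 h
    (inPos_hgt hj G.eb.2.2.1) G.hD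

/-- The open triangle spanned by `u` and two neighbouring canonical vertices contains no point of `P`:
a point of `P` in it farthest from `ab` would be a canonical vertex of `u`. -/
lemma Gap.empty (C : Cfg P S) {j : ℕ} (hj : j < 3) {u a b : Pt} (G : Gap P S j u a b)
    {y : Pt} (hy : y ∈ P) (h1 : 0 < al u a b y) (h2 : 0 < al u b a y)
    (h3 : al u a b y + al u b a y < 1) : False := by
  have hD := G.hD
  have hD' := cross_ne_swap hD
  have W := G.wall C hj
  obtain ⟨p, ⟨hp, hA, hB, hAB⟩, hmin⟩ := Set.exists_min_image
    {y ∈ P | 0 < al u a b y ∧ 0 < al u b a y ∧ al u a b y + al u b a y < 1}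
    (fun y => al u a b y + al u b a y) (C.fin.subset (fun z hz => hz.1)) ⟨y, hy, h1, h2, h3⟩
  have hmin' : ∀ y ∈ P, 0 < al u a b y → 0 < al u b a y → al u a b y + al u b a y < 1 →
      al u a b p + al u b a p ≤ al u a b y + al u b a y :=
    fun y hy h1 h2 h3 => hmin y ⟨hy, h1, h2, h3⟩
  clear hmin h1 h2 h3 hy y
  have hpu : inPos j p u := wedge_inPos hj hD G.ea.2.2.1 G.eb.2.2.1 hA hB
  have hsee : CanSee S p u := by
    right
    intro c hc hx
    obtain ⟨τ, σ, t0, t1, s0, s1, hm⟩ := (PCross_iff _ _ _ _).1 hx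
    have hC : Constr S c.1 c.2 := Or.inl hc
    have hmA : al u a b (pt c.1 c.2 τ) = (1 - σ) * al u a b p := by
      rw [hm, al_pt, al_origin]; ring
    have hmB : al u b a (pt c.1 c.2 τ) = (1 - σ) * al u b a p := by
      rw [hm, al_pt, al_origin]; ring
    have key : ∀ c1 c2 τ, Constr S c1 c2 → 0 < τ → τ < 1 →
        al u a b (pt c1 c2 τ) = (1 - σ) * al u a b p →
        al u b a (pt c1 c2 τ) = (1 - σ) * al u b a p →
        al u a b c2 + al u b a c2 ≤ (1 - σ) * (al u a b p + al u b a p) → False := by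
      intro c1 c2 τ hC t0 t1 hmA hmB hle
      rcases W.exit hC t0.le t1.le (by rw [hmA]; nlinarith) (by rw [hmB]; nlinarith) with
        ⟨g1, g2⟩ | ⟨θ, u0, u1, h⟩
      · have := hmin' c2 (C.mem hC).2 g1 g2 (by nlinarith)
        nlinarith
      · rw [hmA, hmB] at h
        rcases h with ⟨f1, f2⟩ | ⟨f1, f2⟩ <;>
        nlinarith [mul_le_mul_of_nonneg_left hle u0.le]
    have k1 := not_le.1 (key c.1 c.2 τ hC t0 t1 hmA hmB)
    have k2 := not_le.1 (key c.2 c.1 (1 - τ) hC.symm (by linarith) (by linarith)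
      (by rw [← pt_comm]; exact hmA) (by rw [← pt_comm]; exact hmB))
    rw [al_pt] at hmA hmB
    nlinarith
  refine G.no_canon p hp hA hB ⟨hp, G.ea.2.1, hpu, hsee, fun w hw hpw hsw _ => ?_⟩
  by_contra! hlt
  obtain ⟨k, l, hk, hl, hjk, hjl, hkl⟩ := exists_others j hj
  -- The side `ab` is flat relative to the cone, so the cone of `p` leads away from it.
  have hσ : al u a b w + al u b a w < al u a b p + al u b a p := by
    have n1 := G.notIn C hj
    have n2 := G.symm.notIn C hj
    have pa := G.ea.2.2.1
    have pb := G.eb.2.2.1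
    have hab : a ≠ b := by
      rintro rfl; exact hD (by simp [crossP]; ring)
    have k1 := C.hgt_ne hk G.ea.1 G.eb.1 hab
    have k2 := C.hgt_ne hl G.ea.1 G.eb.1 hab
    obtain ⟨κ, hκ, hcr⟩ := cross_hgt hk hl hkl
    have e1 : crossP (w - p) (b - a) = crossP (a - u) (b - u) *
        ((al u a b w + al u b a w) - (al u a b p + al u b a p)) := by
      have : crossP (w - p) (b - a) = crossP (w - p) (b - p) - crossP (w - p) (a - p) := by
        simp [crossP]; ring
      rw [this, cross_coord hD p w b, cross_coord hD p w a, al_self hD, al_self hD', al_other, al_other]; ring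
    have e2 : crossP (a - u) (b - u) = crossP (a - u) (b - a) := by simp [crossP]; ring
    rw [e2, hcr, hcr] at e1
    simp only [hgt_sub] at e1
    rw [inPos_iff hj hk hl hjk hjl hkl] at n1 n2 pa pb hpw
    have e3 : (hgt k w - hgt k p) * (hgt l b - hgt l a) - (hgt l w - hgt l p) * (hgt k b - hgt k a) =
        ((hgt k a - hgt k u) * (hgt l b - hgt l a) - (hgt l a - hgt l u) * (hgt k b - hgt k a)) *
        ((al u a b w + al u b a w) - (al u a b p + al u b a p)) :=
      mul_left_cancel₀ hκ (by linarith)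
    by_contra! hge
    rcases lt_or_gt_of_ne k1 with k1 | k1
    · have k2 : hgt l b < hgt l a := by
        by_contra! hh
        exact n2 ⟨k1, lt_of_le_of_ne hh k2⟩
      have f1 := mul_pos (sub_pos.2 hpw.1) (sub_pos.2 k2)
      have f2 := mul_pos (sub_pos.2 hpw.2) (sub_pos.2 k1)
      have f3 := mul_pos (sub_pos.2 pa.1) (sub_pos.2 k2)
      have f4 := mul_pos (sub_pos.2 pa.2) (sub_pos.2 k1)
      have f5 := mul_nonneg (add_pos f3 f4).le (sub_nonneg.2 hge)
      nlinarith
    · have k2 : hgt l a < hgt l b := by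
        by_contra! hh
        exact n1 ⟨k1, lt_of_le_of_ne hh k2.symm⟩
      have f1 := mul_pos (sub_pos.2 hpw.1) (sub_pos.2 k2)
      have f2 := mul_pos (sub_pos.2 hpw.2) (sub_pos.2 k1)
      have f3 := mul_pos (sub_pos.2 pa.1) (sub_pos.2 k2)
      have f4 := mul_pos (sub_pos.2 pa.2) (sub_pos.2 k1)
      have f5 := mul_nonneg (add_pos f3 f4).le (sub_nonneg.2 hge)
      nlinarith
  by_cases hin : 0 < al u a b w ∧ 0 < al u b a w
  · linarith [hmin' w hw hin.1 hin.2 (by linarith)]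
  have hpw' := inPos_ne hj hpw
  have hjp := inPos_hgt hj hpu
  -- The segment `pw` leaves the triangle across one of the edges `ua`, `ub`.
  have cross : ∀ a b, Gap P S j u a b → ∀ θ : ℝ, 0 < θ → θ ≤ 1 →
      (1 - θ) * al u b a p + θ * al u b a w = 0 →
      0 ≤ (1 - θ) * al u a b p + θ * al u a b w →
      (1 - θ) * al u a b p + θ * al u a b w < 1 → False := by
    intro a b G θ t0 t1 e0 e1 e2
    have hD := G.hD
    rw [← al_pt] at e0 e1 e2
    have hn : pt p w θ = pt a u (1 - al u a b (pt p w θ)) := by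
      apply eq_of_al hD
      · generalize al u a b (pt p w θ) = x
        rw [al_pt, al_self hD, al_origin]; ring
      · rw [e0, al_pt, al_other, al_origin]; ring
    have hau := inPos_ne hj G.ea.2.2.1
    have hjn : hgt j (pt p w θ) < hgt j u := by rw [hgt_pt]; nlinarith
    have e1' : 0 < al u a b (pt p w θ) := by
      refine lt_of_le_of_ne e1 fun e => ?_
      rw [← e, sub_zero, pt_one] at hn
      rw [hn] at hjn; exact lt_irrefl _ hjn
    have t1' : θ < 1 := by
      refine lt_of_le_of_ne t1 fun e => ?_
      rw [e, pt_one] at hn e0 e1 e2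
      rcases C.not_on_line G.ea.1 G.ea.2.1 hw hau hn with rfl | rfl
      · rw [al_self hD] at e2; exact lt_irrefl _ e2
      · exact lt_irrefl _ hlt
    refine C.block hj G.ea hp hw hpw' hsw (by linarith) (by linarith) t0 t1' hn.symm ?_ hlt
    have pa := G.ea.2.2.1
    rw [inPos_iff hj hk hl hjk hjl hkl] at pa hpw ⊢
    have q1 := congrArg (hgt k) hn
    have q2 := congrArg (hgt l) hn
    generalize al u a b (pt p w θ) = x at *
    rw [hgt_pt, hgt_pt] at q1 q2
    constructor
    · nlinarith [mul_pos (sub_pos.2 e2) (sub_pos.2 pa.1),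
        mul_nonneg (sub_nonneg.2 t1) (sub_pos.2 hpw.1).le]
    · nlinarith [mul_pos (sub_pos.2 e2) (sub_pos.2 pa.2),
        mul_nonneg (sub_nonneg.2 t1) (sub_pos.2 hpw.2).le]
  obtain ⟨θ, t0, t1, h⟩ := exit_real (a1 := al u a b w) (b1 := al u b a w) hA hB (by
    by_contra! hh; exact hin hh)
  rcases h with ⟨f1, f2⟩ | ⟨f1, f2⟩
  · exact cross b a G.symm θ t0 t1 f1 f2 (by nlinarith)
  · exact cross a b G θ t0 t1 f1 f2 (by nlinarith)

/-- Neighbouring canonical vertices see each other. -/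
lemma Gap.see (C : Cfg P S) {j : ℕ} (hj : j < 3) {u a b : Pt} (G : Gap P S j u a b) :
    CanSee S a b := by
  have hD := G.hD
  have hD' := cross_ne_swap hD
  have W := G.wall C hj
  by_cases hcab : Constr S a b
  · exact Or.inl hcab
  right
  intro c hc hx
  obtain ⟨τ, σ, t0, t1, s0, s1, hm⟩ := (PCross_iff _ _ _ _).1 hx
  have hC : Constr S c.1 c.2 := Or.inl hc
  have hmA : al u a b (pt c.1 c.2 τ) = 1 - σ := by
    rw [hm, al_pt, al_self hD, al_other]; ring
  have hmB : al u b a (pt c.1 c.2 τ) = σ := by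
    rw [hm, al_pt, al_self hD', al_other]; ring
  have key : ∀ c1 c2 τ, Constr S c1 c2 → 0 < τ → τ < 1 →
      al u a b (pt c1 c2 τ) = 1 - σ → al u b a (pt c1 c2 τ) = σ →
      1 ≤ al u a b c2 + al u b a c2 := by
    intro c1 c2 τ hC t0 t1 hmA hmB
    by_contra! hle
    rcases W.exit hC t0.le t1.le (by rw [hmA]; linarith) (by rw [hmB]; linarith) with
      ⟨g1, g2⟩ | ⟨θ, u0, u1, h⟩
    · exact G.empty C hj (C.mem hC).2 g1 g2 hle
    · rw [hmA, hmB] at h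
      rcases h with ⟨f1, f2⟩ | ⟨f1, f2⟩ <;> nlinarith
  have k1 := key c.1 c.2 τ hC t0 t1 hmA hmB
  have k2 := key c.2 c.1 (1 - τ) hC.symm (by linarith) (by linarith)
    (by rw [← pt_comm]; exact hmA) (by rw [← pt_comm]; exact hmB)
  rw [al_pt] at hmA hmB
  have l1 : al u a b c.1 + al u b a c.1 = 1 := le_antisymm (by nlinarith) k2
  have l2 : al u a b c.2 + al u b a c.2 = 1 := le_antisymm (by nlinarith) k1
  have hab : a ≠ b := by
    rintro rfl; exact hD (by simp [crossP]; ring)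
  have onl : ∀ c ∈ P, al u a b c + al u b a c = 1 → c = a ∨ c = b := by
    intro c hc hs
    refine C.not_on_line G.ea.1 G.eb.1 hc hab (τ := al u b a c) ?_
    apply eq_of_al hD
    · rw [al_pt, al_self hD, al_other]; linarith
    · rw [al_pt, al_self hD', al_other]; ring
  rcases onl _ (C.mem hC).1 l1 with f1 | f1 <;> rcases onl _ (C.mem hC).2 l2 with f2 | f2
  · rw [f1, f2, al_other] at hmB; linarith
  · rw [f1, f2] at hC; exact hcab hC
  · rw [f1, f2] at hC; exact hcab hC.symm
  · rw [f1, f2, al_other] at hmA; linarith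

end CHT6

/-! ### The two sides of an edge `vx` -/

namespace CHT6

variable {P : Set Pt} {S : Set (Pt × Pt)}

/-- The coefficient of `u` in the affine combination of `u`, `a`, `b` representing a point is the ratio
of the signed distances to the line `ab`. -/
lemma cross_side {u a b : Pt} (hD : crossP (a - u) (b - u) ≠ 0) (y : Pt) :
    crossP (a - b) (y - b) = (1 - al u a b y - al u b a y) * crossP (a - b) (u - b) := by
  rw [cross_coord hD b a y, cross_coord hD b a u, al_self hD, al_self (cross_ne_swap hD), al_other,
    al_other, al_origin, al_origin]
  ring

/-- The orientation of the triangle `x, v, u` is determined by the cones of `x` containing `v` and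
`u`. -/
lemma side_sign {i j l : ℕ} (hi : i < 3) (hj : j < 3) (hl : l < 3) (hij : i ≠ j) (hil : i ≠ l)
    (hjl : j ≠ l) {x v u : Pt} (hv : inPos i x v) (hu : inPos j x u) :
    (hgt i v - hgt i x) * (hgt l u - hgt l x) - (hgt l v - hgt l x) * (hgt i u - hgt i x) < 0 := by
  have h1 := inPos_hgt hi hv
  rw [inPos_iff hi hj hl hij hil hjl] at hv
  rw [inPos_iff hj hi hl hij.symm hjl hil] at hu
  nlinarith [mul_pos (sub_pos.2 h1) (sub_pos.2 hu.2), mul_pos (sub_pos.2 hv.2) (sub_pos.2 hu.1)]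

/-- Two vertices with edges from both `v` and `x` in the same cone cannot be positioned so that the
edges `vu'` and `xu` cross. -/
lemma no_cross (C : Cfg P S) {j : ℕ} (hj : j < 3) {u u' v x : Pt}
    (hvu : EdgeTo P S j v u) (hxu : EdgeTo P S j x u)
    (hvu' : EdgeTo P S j v u') (hxu' : EdgeTo P S j x u') (hne : u ≠ u')
    (hD : crossP (v - u) (x - u) ≠ 0) (hA : al u v x u' < 0) (hB : 0 < al u x v u')
    (hL : 0 < 1 - al u v x u' - al u x v u') : False := by
  have hD' := cross_ne_swap hD
  have hq : pt v u' (1 / (1 - al u v x u')) =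
      pt x u ((1 - al u v x u' - al u x v u') / (1 - al u v x u')) := by
    have h0 : 1 - al u v x u' ≠ 0 := by linarith
    apply eq_of_al hD
    · rw [al_pt, al_pt, al_self hD, al_other, al_origin]
      field_simp
      ring
    · rw [al_pt, al_pt, al_self hD', al_other, al_origin]
      field_simp
      ring
  have p0 : 0 < 1 - al u v x u' := by linarith
  have r0 : 0 < 1 / (1 - al u v x u') := by positivity
  have r1 : 1 / (1 - al u v x u') < 1 := by rw [div_lt_one p0]; linarith
  have s0 : 0 < (1 - al u v x u' - al u x v u') / (1 - al u v x u') := by positivity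
  have s1 : (1 - al u v x u' - al u x v u') / (1 - al u v x u') < 1 := by
    rw [div_lt_one p0]; linarith
  rcases lt_or_gt_of_ne (C.hgt_ne hj hvu.2.1 hvu'.2.1 hne) with h | h
  · exact C.block hj hvu' hxu.1 hxu.2.1 (inPos_ne hj hxu.2.2.1) hxu.2.2.2.1 r0 r1 s0 s1 hq
      hvu.2.2.1 h
  · exact C.block hj hxu hvu'.1 hvu'.2.1 (inPos_ne hj hvu'.2.2.1) hvu'.2.2.2.1 s0 s1 r0 r1 hq.symm
      hxu'.2.2.1 h

/-- At most one vertex in a given cone of `v` and `x` has `v`, `x` as neighbouring canonical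
vertices. -/
lemma Gap.unique (C : Cfg P S) {i j : ℕ} (hi : i < 3) (hj : j < 3) (hij : i ≠ j) {u u' v x : Pt}
    (hxv : inPos i x v) (G : Gap P S j u v x) (G' : Gap P S j u' v x) : u = u' := by
  by_contra hne
  obtain ⟨l, hl, hil, hjl⟩ := exists_third hi hj hij
  have hD := G.hD
  have hD' := cross_ne_swap hD
  have hL : 0 < 1 - al u v x u' - al u x v u' := by
    have s1 := side_sign hi hj hl hij hil hjl hxv G.eb.2.2.1
    have s2 := side_sign hi hj hl hij hil hjl hxv G'.eb.2.2.1
    obtain ⟨κ, hκ, hcr⟩ := cross_hgt hi hl hil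
    have e := cross_side hD u'
    rw [hcr, hcr] at e
    simp only [hgt_sub] at e
    rw [mul_left_comm] at e
    have e := mul_left_cancel₀ hκ e
    by_contra! hh
    nlinarith
  have hvu' := inPos_ne hj G'.ea.2.2.1
  have hxu' := inPos_ne hj G'.eb.2.2.1
  have hvu := inPos_ne hj G.ea.2.2.1
  have hxu := inPos_ne hj G.eb.2.2.1
  have hu := G.ea.2.1
  have hu' := G'.ea.2.1
  have hv := G.ea.1
  have hx := G.eb.1
  have hA0 : al u v x u' ≠ 0 := fun h => by
    have : u' = pt u x (al u x v u') := by
      apply eq_of_al hD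
      · rw [h, al_pt, al_other, al_origin]; ring
      · rw [al_pt, al_self hD', al_origin]; ring
    rcases C.not_on_line hu hx hu' hxu.symm this with h | h
    · exact hne h.symm
    · exact hxu' h.symm
  have hB0 : al u x v u' ≠ 0 := fun h => by
    have : u' = pt u v (al u v x u') := by
      apply eq_of_al hD
      · rw [al_pt, al_self hD, al_origin]; ring
      · rw [h, al_pt, al_other, al_origin]; ring
    rcases C.not_on_line hu hv hu' hvu.symm this with h | h
    · exact hne h.symm
    · exact hvu' h.symm
  rcases lt_or_gt_of_ne hA0 with hA | hA <;> rcases lt_or_gt_of_ne hB0 with hB | hB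
  · -- `u` lies in the triangle `u' v x`.
    have e := recon hD u'
    have f1 : al u' v x u = -al u v x u' / (1 - al u v x u' - al u x v u') ∧
        al u' x v u = -al u x v u' / (1 - al u v x u' - al u x v u') := by
      generalize al u v x u' = A at *
      generalize al u x v u' = B at *
      have e1 := congrArg Prod.fst e
      have e2 := congrArg Prod.snd e
      simp at e1 e2
      have hL' := hL.ne'
      constructor
      · apply al_eq G'.hD (t := -B / (1 - A - B))
        ext <;> simp <;> field_simp
        · linear_combination -e1
        · linear_combination -e2
      · apply al_eq (cross_ne_swap G'.hD) (t := -A / (1 - A - B))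
        ext <;> simp <;> field_simp
        · linear_combination -e1
        · linear_combination -e2
    refine G'.empty C hj hu ?_ ?_ ?_
    · rw [f1.1]; exact div_pos (by linarith) hL
    · rw [f1.2]; exact div_pos (by linarith) hL
    · rw [f1.1, f1.2, ← add_div, div_lt_one hL]; linarith
  · exact no_cross C hj G.ea G.eb G'.ea G'.eb hne hD hA hB hL
  · exact no_cross C hj G.eb G.ea G'.eb G'.ea hne hD' hB hA (by linarith)
  · exact G.empty C hj hu' hA hB (by linarith)

/-- A point on `u`'s side of `vx` that is higher than `x` with respect to the cone `C_i` has a positive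
coefficient at `v`. -/
lemma Gap.coef_pos {i j : ℕ} {u v x y : Pt} (G : Gap P S j u v x) (hxv : hgt i x < hgt i v)
    (hux : hgt i u < hgt i x) (hL : 0 < 1 - al u v x y - al u x v y) (hy : hgt i x < hgt i y) :
    0 < al u v x y := by
  have e := hgt_recon G.hD i y
  by_contra! h
  nlinarith [mul_pos hL (sub_pos.2 hux), mul_nonneg (neg_nonneg.2 h) (sub_pos.2 hxv).le]

/-- On `u`'s side of `vx` there is no vertex visible from `x` in `C_i` that is closer to `x` than
`v`. -/
lemma Gap.nearer (C : Cfg P S) {i j : ℕ} (hi : i < 3) (hj : j < 3) (hij : i ≠ j) {u v x w : Pt}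
    (hxv : inPos i x v) (G : Gap P S j u v x) (hw : w ∈ P) (hxw : inPos i x w) (hsee : CanSee S x w)
    (hlt : hgt i w < hgt i v) (hL : 0 < 1 - al u v x w - al u x v w) : False := by
  obtain ⟨l, hl, hil, hjl⟩ := exists_third hi hj hij
  have hD := G.hD
  have hD' := cross_ne_swap hD
  have xu := G.eb.2.2.1
  have vu := G.ea.2.2.1
  have hxu := inPos_hgt hj xu
  have hne := inPos_ne hi hxw
  have hvu := inPos_ne hj vu
  have h1 := inPos_hgt hi hxv
  have h2 := inPos_hgt hi hxw
  rw [inPos_iff hi hj hl hij hil hjl] at hxv hxw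
  have xu' := (inPos_iff hj hi hl hij.symm hjl hil _ _).1 xu
  have vu' := (inPos_iff hj hi hl hij.symm hjl hil _ _).1 vu
  have hA := G.coef_pos h1 xu'.1 hL h2
  rcases lt_trichotomy (al u x v w) 0 with hB | hB | hB
  · have p0 : 0 < 1 - al u x v w := by linarith
    have hq : pt v u ((1 - al u v x w - al u x v w) / (1 - al u x v w)) =
        pt x w (1 / (1 - al u x v w)) := by
      apply eq_of_al hD
      · rw [al_pt, al_pt, al_self hD, al_other, al_origin]
        field_simp
        ring
      · rw [al_pt, al_pt, al_self hD', al_other, al_origin]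
        field_simp
        ring
    refine C.block hj G.ea G.eb.1 hw hne hsee (by positivity) ?_ (by positivity) ?_ hq ?_ ?_
    · rw [div_lt_one p0]; linarith
    · rw [div_lt_one p0]; linarith
    · rw [inPos_iff hj hi hl hij.symm hjl hil]
      refine ⟨hlt, ?_⟩
      rw [hgt_recon hD l w]
      nlinarith [mul_pos hL (sub_pos.2 vu'.2), mul_pos (neg_pos.2 hB) (sub_pos.2 hxv.2)]
    · linarith [hxw.1]
  · have : w = pt u v (al u v x w) := by
      apply eq_of_al hD
      · rw [al_pt, al_self hD, al_origin]; ring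
      · rw [hB, al_pt, al_other, al_origin]; ring
    rcases C.not_on_line G.ea.2.1 G.ea.1 hw hvu.symm this with h | h
    · rw [h] at h2; linarith [xu'.1]
    · rw [h] at hlt; exact lt_irrefl _ hlt
  · exact G.empty C hj hw hA hB (by linarith)

/-- On `u`'s side of `vx` there is no point of `P` in the negative cone `C̄_i` of `v` that is closer to
`v` than `x`. -/
lemma Gap.canon (C : Cfg P S) {i j : ℕ} (hi : i < 3) (hj : j < 3) (hij : i ≠ j) {u v x y : Pt}
    (hxv : inPos i x v) (G : Gap P S j u v x) (hy : y ∈ P) (hyv : inPos i y v)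
    (hlt : hgt i x < hgt i y) (hL : 0 < 1 - al u v x y - al u x v y) : False := by
  obtain ⟨l, hl, hil, hjl⟩ := exists_third hi hj hij
  have h1 := inPos_hgt hi hxv
  rw [inPos_iff hi hj hl hij hil hjl] at hxv hyv
  have xu' := (inPos_iff hj hi hl hij.symm hjl hil _ _).1 G.eb.2.2.1
  have vu' := (inPos_iff hj hi hl hij.symm hjl hil _ _).1 G.ea.2.2.1
  have hA := G.coef_pos h1 xu'.1 hL hlt
  refine G.empty C hj hy hA ?_ (by linarith)
  have e := hgt_recon G.hD l y
  by_contra! h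
  nlinarith [mul_pos hL (sub_pos.2 vu'.2), mul_nonneg (neg_nonneg.2 h) (sub_pos.2 hxv.2).le]

/-- If `v`, `x` are neighbouring canonical vertices for vertices in two different cones, which then lie
on opposite sides of `vx`, then `x` is a closest canonical vertex of `v`. -/
lemma Gap.closest (C : Cfg P S) {i j j' : ℕ} (hi : i < 3) (hj : j < 3) (hj' : j' < 3) (hij : i ≠ j)
    (hij' : i ≠ j') (hjj' : j ≠ j') {u u' v x : Pt} (hxv : inPos i x v)
    (G : Gap P S j u v x) (G' : Gap P S j' u' v x) : ClosestCanon P S i v x := by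
  have hv := G.ea.1
  have hx := G.eb.1
  have hne := inPos_ne hi hxv
  have sides : ∀ y ∈ P, y ≠ v → y ≠ x → 0 < 1 - al u v x y - al u x v y ∨
      0 < 1 - al u' v x y - al u' x v y := by
    intro y hy h1 h2
    have s1 := side_sign hi hj hj' hij hij' hjj' hxv G.eb.2.2.1
    have s2 := side_sign hi hj' hj hij' hij hjj'.symm hxv G'.eb.2.2.1
    obtain ⟨κ, hκ, hcr⟩ := cross_hgt hi hj' hij'
    have e := cross_side G.hD y
    have e' := cross_side G'.hD y
    have h0 := C.cross_ne hx hv hy hne h1.symm h2.symm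
    have q1 := hgt_sum hi hj hj' hij hij' hjj' v
    have q2 := hgt_sum hi hj hj' hij hij' hjj' x
    have q3 := hgt_sum hi hj hj' hij hij' hjj' u'
    generalize 1 - al u v x y - al u x v y = L at *
    generalize 1 - al u' v x y - al u' x v y = L' at *
    rw [hcr (v - x) (u - x)] at e
    rw [hcr (v - x) (u' - x)] at e'
    simp only [hgt_sub] at e e'
    have s2 : 0 < (hgt i v - hgt i x) * (hgt j' u' - hgt j' x) -
        (hgt j' v - hgt j' x) * (hgt i u' - hgt i x) := by
      have a1 : hgt j' v = -hgt i v - hgt j v := by linarith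
      have a2 : hgt j' x = -hgt i x - hgt j x := by linarith
      have a3 : hgt j' u' = -hgt i u' - hgt j u' := by linarith
      rw [a1, a2, a3]
      linarith
    generalize (hgt i v - hgt i x) * (hgt j' u' - hgt j' x) -
        (hgt j' v - hgt j' x) * (hgt i u' - hgt i x) = f' at *
    generalize (hgt i v - hgt i x) * (hgt j' u - hgt j' x) -
        (hgt j' v - hgt j' x) * (hgt i u - hgt i x) = f at *
    have n1 : L ≠ 0 := by rintro rfl; exact h0 (by rw [e]; ring)
    by_contra! hh
    have hL : L < 0 := lt_of_le_of_ne hh.1 n1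
    have g : L * f = L' * f' := mul_left_cancel₀ hκ (by linarith)
    nlinarith [mul_pos_of_neg_of_neg hL s1, mul_nonneg (neg_nonneg.2 hh.2) s2.le]
  have hE : EdgeTo P S i x v := by
    refine ⟨hx, hv, hxv, (G.see C hj).symm, fun w hw hxw hsw _ => ?_⟩
    by_contra! hlt
    rcases sides w hw (by rintro rfl; exact lt_irrefl _ hlt) (inPos_ne hi hxw).symm with h | h
    · exact G.nearer C hi hj hij hxv hw hxw hsw hlt h
    · exact G'.nearer C hi hj' hij' hxv hw hxw hsw hlt h
  refine ⟨hE.canonVert hi, fun y hy hcy _ => ?_⟩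
  have hyv : inPos i y v := hcy.2.2
  unfold negProj
  rw [projLen_eq hi, projLen_eq hi]
  by_contra! hlt
  rcases sides y hy (inPos_ne hi hyv) (by rintro rfl; exact lt_irrefl _ hlt) with h | h
  · exact G.canon C hi hj hij hxv hy hyv (by linarith) h
  · exact G'.canon C hi hj' hij' hxv hy hyv (by linarith) h

end CHT6

namespace CHT6

/-- **Lemma 9.** Let `vx` be an edge of `G₉` with `x` in a negative cone `C̄ᵥᵢ` of `v`. If
`x` is not the closest canonical vertex to `v` in a subcone of `C̄ᵥᵢ` containing it, then
the edge `vx` is used by the canonical path of at most one vertex. -/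
theorem stmt_18 (P : Set Pt) (S : Set (Pt × Pt)) (hPfin : P.Finite)
    (hSP : ∀ c ∈ S, c.1 ∈ P ∧ c.2 ∈ P)
    (hSnc : ∀ c ∈ S, ∀ d ∈ S, c ≠ d → ¬ PCross c.1 c.2 d.1 d.2)
    (hGP : GenPos P)
    (v x : Pt) (i : ℕ) (hi : i < 3)
    (hvx : G9Edge P S v x) (hneg : inNeg i v x)
    (hnotclosest : ¬ ClosestCanon P S i v x) :
    ∀ u ∈ P, ∀ u' ∈ P, ∀ j < 3, ∀ j' < 3,
      (ConsecCanon P S j u v x ∨ ConsecCanon P S j u x v) →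
      (ConsecCanon P S j' u' v x ∨ ConsecCanon P S j' u' x v) →
      u = u' := by
  intro u _ u' _ j hj j' hj' h h'
  have C : Cfg P S := ⟨hPfin, hSP, hSnc, hGP⟩
  have gap : ∀ u, ∀ j < 3, (ConsecCanon P S j u v x ∨ ConsecCanon P S j u x v) →
      Gap P S j u v x := by
    rintro u j hj (h | h)
    · exact Gap.of_consec hj h
    · exact (Gap.of_consec hj h).symm
  have G := gap u j hj h
  have G' := gap u' j' hj' h'
  have hij : i ≠ j := by
    rintro rfl; exact G.symm.notIn C hi hneg
  have hij' : i ≠ j' := by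
    rintro rfl; exact G'.symm.notIn C hi hneg
  by_cases hjj' : j = j'
  · subst hjj'
    exact G.unique C hi hj hij hneg G'
  · exact (hnotclosest (G.closest C hi hj hj' hij hij' hjj' hneg G')).elim

end CHT6
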